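/- arXiv:1910.01783 — 9 statements merged into one kernel-verified Lean document; each statement's English description precedes it below -/
import Mathlib

section
/- Let G be a finite loopless digraph, let S be a knot-free vertex deletion set of G, let s ∈ S, and let S′ = S ∖ {s}. Let Z′ be the set of sinks of G−S′. If there is a directed path in G−S′ from s to some vertex of Z′, then S′ is also a knot-free vertex deletion set of G. -/
/-!
Let `Q` be a knot of `G − (S ∖ {s})`. No arc leaves `Q`, so `Q` is closed under reachability, and
each of its vertices has an out-arc. If `s ∈ Q`, the sink reachable from `s` would lie in `Q` and
have an out-arc, which is absurd. If `s ∉ Q`, then `Q` avoids all of `S` and is already a knot of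
`G − S`, contradicting that `S` is a solution.
-/

open Relation

variable {V : Type*}

/-- Arc relation of the induced subdigraph of the digraph `E` on vertex set `X`. -/
def Restrict (E : V → V → Prop) (X : Set V) : V → V → Prop :=
  fun a b => a ∈ X ∧ b ∈ X ∧ E a b

/-- `Q` is a knot of the digraph with arc relation `E`: `Q` has at least two vertices,
`Q` induces a strongly connected subdigraph (any vertex of `Q` reaches any other by a
directed path inside `Q`), and no arc of `E` leaves `Q`. -/
def IsKnot (E : V → V → Prop) (Q : Set V) : Prop :=
  Q.Nontrivial ∧
  (∀ u ∈ Q, ∀ v ∈ Q, ReflTransGen (Restrict E Q) u v) ∧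
  (∀ u ∈ Q, ∀ v, E u v → v ∈ Q)

/-- The digraph `E` contains no knot. -/
def KnotFree (E : V → V → Prop) : Prop := ∀ Q : Set V, ¬ IsKnot E Q

/-- `S` is a knot-free vertex deletion set of the digraph `E`: `G − S` is knot-free. -/
def IsKFVD (E : V → V → Prop) (S : Set V) : Prop := KnotFree (Restrict E Sᶜ)

/-- `S` is a knot-free vertex deletion set of the induced subdigraph `E[X]`:
`S ⊆ X` and `E[X] − S` is knot-free. -/
def IsKFVDOn (E : V → V → Prop) (X S : Set V) : Prop :=
  S ⊆ X ∧ KnotFree (Restrict E (X \ S))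

/-- The set of sinks of the induced subdigraph `E[X]`: vertices of `X` with no
out-neighbor inside `X`. -/
def Sinks (E : V → V → Prop) (X : Set V) : Set V :=
  {v | v ∈ X ∧ ∀ w ∈ X, ¬ E v w}

/-- Out-neighborhood of a set `C` of vertices: `N⁺(C) = (⋃ v ∈ C, N⁺(v)) \ C`. -/
def NOut (E : V → V → Prop) (C : Set V) : Set V :=
  {w | ∃ v ∈ C, E v w} \ C

/-- The induced subdigraph `E[X]` contains a directed cycle. -/
def HasCycleIn (E : V → V → Prop) (X : Set V) : Prop :=
  ∃ v w, Restrict E X v w ∧ ReflTransGen (Restrict E X) w v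

/-- `U` is (the vertex set of) a strongly connected component of the digraph `E`:
a maximal nonempty set of mutually reachable vertices. -/
def IsSCC (E : V → V → Prop) (U : Set V) : Prop :=
  U.Nonempty ∧
  (∀ u ∈ U, ∀ v ∈ U, ReflTransGen E u v) ∧
  (∀ w, (∀ u ∈ U, ReflTransGen E u w ∧ ReflTransGen E w u) → w ∈ U)

/-- Every vertex of a knot has an out-arc, since a knot has a second vertex to reach. -/
theorem IsKnot.exists_out {V : Type*} {E : V → V → Prop} {Q : Set V} (hQ : IsKnot E Q)
    {u : V} (hu : u ∈ Q) : ∃ w, E u w := by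
  obtain ⟨v, hv, hne⟩ := hQ.1.exists_ne u
  rcases (hQ.2.1 u hu v hv).cases_head with h | ⟨w, hw, -⟩
  · exact absurd h.symm hne
  · exact ⟨w, hw.2.2⟩

theorem IsKnot.mem_of_reflTransGen {V : Type*} {E : V → V → Prop} {Q : Set V}
    (hQ : IsKnot E Q) {u v : V} (hu : u ∈ Q) (h : ReflTransGen E u v) : v ∈ Q := by
  induction h with
  | refl => exact hu
  | tail _ hbc ih => exact hQ.2.2 _ ih _ hbc

/-- If `s ∈ S` has a directed path in `G − (S ∖ {s})` to a sink of `G − (S ∖ {s})`,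
then `S ∖ {s}` is also a knot-free vertex deletion set. -/
theorem re_add_vertex_with_path_to_sink {V : Type*} [Fintype V]
    (E : V → V → Prop) (hloopless : ∀ v, ¬ E v v)
    (S : Set V) (hS : IsKFVD E S) (s : V) (hs : s ∈ S)
    (hpath : ∃ z ∈ Sinks E (S \ {s})ᶜ, ReflTransGen (Restrict E (S \ {s})ᶜ) s z) :
    IsKFVD E (S \ {s}) := by
  intro Q hQ
  obtain ⟨z, hz, hsz⟩ := hpath
  by_cases hsQ : s ∈ Q
  · obtain ⟨w, -, hw, hzw⟩ := hQ.exists_out (hQ.mem_of_reflTransGen hsQ hsz)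
    exact hz.2 w hw hzw
  · have hsub : ∀ v ∈ Q, v ∈ Sᶜ := by
      intro v hv hvS
      obtain ⟨w, hvX, -⟩ := hQ.exists_out hv
      exact hvX ⟨hvS, fun h => hsQ (h ▸ hv)⟩
    refine hS Q ⟨hQ.1, fun u hu v hv => ReflTransGen.mono ?_ _ _ (hQ.2.1 u hu v hv), ?_⟩
    · rintro a b ⟨ha, hb, -, -, hab⟩
      exact ⟨ha, hb, hsub a ha, hsub b hb, hab⟩
    · rintro u hu v ⟨-, hvS, huv⟩
      exact hQ.2.2 u hu v ⟨fun h => hsub u hu h.1, fun h => hvS h.1, huv⟩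
end

section
/- Let G be a finite loopless digraph and let S be a knot-free vertex deletion set of G of minimum size (no knot-free vertex deletion set of G has strictly smaller cardinality). Let Z be the set of sinks of G−S. Then N⁺(Z) = S. -/
/-!
`N⁺(Z) ⊆ S` is immediate: an out-neighbor of a sink of `G − S` cannot lie outside `S`.

For the converse let `v ∈ S`. By minimality `G − (S \ {v})` has a knot `Q`, and `Q` contains some
`u ≠ v`, which is therefore a vertex of `G − S`. In a finite loopless knot-free digraph every vertex
reaches a sink (`KnotFree.exists_reachable_sink`), so `u` reaches a sink `z` of `G − S`. As `Q` is
closed under arcs, `z ∈ Q`, and as `Q` is strongly connected with at least two vertices, `z` has an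
out-neighbor in `Q` (`IsKnot.exists_arc`). That out-neighbor lies outside `S \ {v}` but, `z` being a
sink of `G − S`, inside `S`; so it is `v`.
-/

open Relation

variable {V : Type*}

/-- Among the vertices `w` reachable from `u`, pick one whose set of reachable vertices is smallest.
That set is strongly connected and closed under arcs, so it is a knot unless it is `{w}`, in which
case `w` is a sink. -/
lemma KnotFree.exists_reachable_sink {V : Type*} [Finite V] {R : V → V → Prop}
    (hR : KnotFree R) (hloop : ∀ v, ¬ R v v) (u : V) :
    ∃ z, ReflTransGen R u z ∧ ∀ x, ¬ R z x := by
  obtain ⟨w, huw, hw⟩ := Set.exists_min_image {w | ReflTransGen R u w}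
    (fun w => {x | ReflTransGen R w x}.ncard) (Set.toFinite _) ⟨u, .refl⟩
  -- By minimality, everything reachable from `w` reaches `w` back.
  have hback : ∀ x, ReflTransGen R w x → ReflTransGen R x w := by
    intro x hx
    have hsub : {y | ReflTransGen R x y} ⊆ {y | ReflTransGen R w y} :=
      fun y hy => ReflTransGen.trans hx hy
    have heq := Set.eq_of_subset_of_ncard_le hsub (hw x (ReflTransGen.trans huw hx))
    have hmem : w ∈ {y | ReflTransGen R w y} := ReflTransGen.refl
    rw [← heq] at hmem
    exact hmem
  refine ⟨w, huw, fun x hx => ?_⟩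
  refine hR {y | ReflTransGen R w y} ⟨⟨w, .refl, x, .single hx, ?_⟩, ?_, ?_⟩
  · rintro rfl
    exact hloop _ hx
  · intro a ha b hb
    have hab : ReflTransGen R a b := (hback a ha).trans hb
    clear hb
    induction hab with
    | refl => exact .refl
    | tail hac hcd ih =>
      exact ih.tail ⟨ReflTransGen.trans ha hac, (ReflTransGen.trans ha hac).tail hcd, hcd⟩
  · exact fun a ha b hab => ReflTransGen.tail ha hab

lemma IsKnot.exists_arc {V : Type*} {R : V → V → Prop} {Q : Set V} (hQ : IsKnot R Q)
    {u : V} (hu : u ∈ Q) : ∃ x ∈ Q, R u x := by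
  obtain ⟨y, hy, hne⟩ := hQ.1.exists_ne u
  rcases (hQ.2.1 u hu y hy).cases_head with h | ⟨x, hx, -⟩
  · exact absurd h.symm hne
  · exact ⟨x, hx.2.1, hx.2.2⟩

/-- For a minimum knot-free vertex deletion set `S` with set of sinks `Z` in `G − S`,
we have `N⁺(Z) = S`. -/
theorem nout_of_sinks_eq_min_solution {V : Type*} [Fintype V]
    (E : V → V → Prop) (hloopless : ∀ v, ¬ E v v)
    (S : Set V) (hS : IsKFVD E S)
    (hmin : ∀ S' : Set V, IsKFVD E S' → S.ncard ≤ S'.ncard) :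
    NOut E (Sinks E Sᶜ) = S := by
  apply Set.Subset.antisymm
  · rintro w ⟨⟨z, hz, hzw⟩, -⟩
    by_contra hw
    exact hz.2 w hw hzw
  · intro v hv
    have hnot : ¬ IsKFVD E (S \ {v}) := fun h =>
      absurd (hmin _ h) (not_le.mpr (Set.ncard_sdiff_singleton_lt_of_mem hv))
    obtain ⟨Q, hQ⟩ : ∃ Q, IsKnot (Restrict E (S \ {v})ᶜ) Q := by
      simpa [IsKFVD, KnotFree] using hnot
    obtain ⟨u, huQ, huv⟩ := hQ.1.exists_ne v
    have huS : u ∈ Sᶜ := by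
      obtain ⟨x, -, hx⟩ := hQ.exists_arc huQ
      exact fun h => hx.1 ⟨h, huv⟩
    obtain ⟨z, huz, hz⟩ := KnotFree.exists_reachable_sink hS
      (fun x hx => hloopless x hx.2.2) u
    have hzQ : z ∈ Q ∧ z ∈ Sᶜ := by
      clear hz
      induction huz with
      | refl => exact ⟨huQ, huS⟩
      | tail _ hcd ih =>
        exact ⟨hQ.2.2 _ ih.1 _ ⟨fun h => hcd.1 h.1, fun h => hcd.2.1 h.1, hcd.2.2⟩, hcd.2.1⟩
    obtain ⟨x, -, hx⟩ := hQ.exists_arc hzQ.1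
    have hxv : x = v := by
      by_contra hne
      exact hz x ⟨hzQ.2, fun h => hx.2.1 ⟨h, hne⟩, hx.2.2⟩
    subst hxv
    exact ⟨⟨z, ⟨hzQ.2, fun w hw hzw => hz w ⟨hzQ.2, hw, hzw⟩⟩, hx.2.2⟩, fun h => h.1 hv⟩
end

section
/- Let G be a finite loopless digraph, let v ∈ V(G) be a vertex that lies on no directed cycle of G (i.e., {v} is a strongly connected component of G), and let k be a nonnegative integer. Then G has a knot-free vertex deletion set of size at most k if and only if G − A[v] has a knot-free vertex deletion set of size at most k. -/
/-!
Write `A[v]` for the set of vertices reaching `v` and `X` for its complement; no arc leaves `X`.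

If `S` solves `G`, then `S \ A[v]` solves `G[X]`: since no arc leaves `X`, a knot of `G[X] - S`
is also a knot of `G - S`.

Conversely, a solution `S ⊆ X` of `G[X]` solves `G`. A knot `Q` of `G - S` that avoids `A[v]` is a
knot of `G[X] - S`. If `Q` meets `A[v]`, a path from a common vertex to `v` stays in `A[v]`, hence
misses `S`, hence stays in `Q`; so `v ∈ Q`, and strong connectivity of `Q` puts `v` on a cycle.

Both directions move a knot between induced subdigraphs through `IsKnot.transfer`.
-/

open Relation

variable {V : Type*}

/-- Every vertex of a knot has an out-neighbor inside the knot from which it can be reached back;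
i.e. it lies on a directed cycle. -/
lemma IsKnot.exists_cycle {E : V → V → Prop} {Q : Set V} (h : IsKnot E Q) {u : V} (hu : u ∈ Q) :
    ∃ w ∈ Q, E u w ∧ ReflTransGen E w u := by
  obtain ⟨x, hx, hxu⟩ := h.1.exists_ne u
  rcases (h.2.1 u hu x hx).cases_head with heq | ⟨w, huw, -⟩
  · exact absurd heq.symm hxu
  · exact ⟨w, huw.2.1, huw.2.2,
      ReflTransGen.mono (fun _ _ hab => hab.2.2) _ _ (h.2.1 w huw.2.1 u hu)⟩

lemma IsKnot.subset {E : V → V → Prop} {Y Q : Set V} (h : IsKnot (Restrict E Y) Q) : Q ⊆ Y := by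
  intro u hu
  obtain ⟨w, -, huw, -⟩ := h.exists_cycle hu
  exact huw.1

/-- A knot of `E[Y]` contained in `Z` is a knot of `E[Z]` as soon as every arc of `E[Z]` leaving
one of its vertices has its head in `Y`. -/
lemma IsKnot.transfer {E : V → V → Prop} {Y Z Q : Set V} (h : IsKnot (Restrict E Y) Q)
    (hQZ : Q ⊆ Z) (hout : ∀ u ∈ Q, ∀ w ∈ Z, E u w → w ∈ Y) : IsKnot (Restrict E Z) Q := by
  refine ⟨h.1, fun u hu w hw => ReflTransGen.mono ?_ _ _ (h.2.1 u hu w hw), ?_⟩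
  · rintro a b ⟨ha, hb, hab⟩
    exact ⟨ha, hb, hQZ ha, hQZ hb, hab.2.2⟩
  · rintro u hu w ⟨-, hw, huw⟩
    exact h.2.2 u hu w ⟨h.subset hu, hout u hu w hw huw, huw⟩

/-- Reduction rule: if `v` lies on no directed cycle of `G`, then `G` has a knot-free
vertex deletion set of size at most `k` iff `G − A[v]` has one. -/
theorem remove_ancestors_of_acyclic_vertex {V : Type*} [Fintype V]
    (E : V → V → Prop) (hloopless : ∀ x, ¬ E x x)
    (v : V) (hv : ¬ ∃ w, E v w ∧ ReflTransGen E w v) (k : ℕ) :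
    (∃ S : Set V, S.ncard ≤ k ∧ IsKFVD E S) ↔
    (∃ S : Set V, S.ncard ≤ k ∧ IsKFVDOn E ({u | TransGen E u v} ∪ {v})ᶜ S) := by
  have hA : ({u | TransGen E u v} ∪ {v} : Set V) = {u | ReflTransGen E u v} := by
    ext u
    simp only [Set.mem_union, Set.mem_ofPred_eq, Set.mem_singleton_iff,
      reflTransGen_iff_eq_or_transGen]
    tauto
  rw [hA]
  constructor
  · rintro ⟨S, hcard, hS⟩
    refine ⟨S \ {u | ReflTransGen E u v},
      (Set.ncard_le_ncard Set.sdiff_subset (Set.toFinite S)).trans hcard, ?_, ?_⟩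
    · exact fun u hu => hu.2
    · intro Q hQ
      have hsub := hQ.subset
      refine hS Q (hQ.transfer ?_ ?_)
      · intro u hu huS
        exact (hsub hu).2 ⟨huS, (hsub hu).1⟩
      · intro u hu w hwS huw
        exact ⟨fun hwv => (hsub hu).1 (ReflTransGen.head huw hwv), fun hw => hwS hw.1⟩
  · rintro ⟨S, hcard, hSX, hS⟩
    refine ⟨S, hcard, fun Q hQ => ?_⟩
    have hvQ : v ∉ Q := by
      intro hvQ
      obtain ⟨w, -, hvw, hwv⟩ := hQ.exists_cycle hvQ
      exact hv ⟨w, hvw.2.2, ReflTransGen.mono (fun _ _ hab => hab.2.2) _ _ hwv⟩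
    have havoid : ∀ u, ReflTransGen E u v → u ∉ Q := by
      intro u huv
      induction huv using ReflTransGen.head_induction_on with
      | refl => exact hvQ
      | head hab hbv ih =>
        exact fun ha => ih (hQ.2.2 _ ha _ ⟨hQ.subset ha, fun hbS => hSX hbS hbv, hab⟩)
    exact hS Q (hQ.transfer (fun u hu => ⟨fun huv => havoid u huv hu, hQ.subset hu⟩)
      fun u _ w hw _ => hw.2)
end

section
/- Let G be a finite loopless digraph, let k be a nonnegative integer, and let U be the vertex set of a strongly connected component of G such that U has strictly more than k out-neighbors in G−U, i.e., |N⁺(U)| > k. Then G has a knot-free vertex deletion set of size at most k if and only if G − A[U] has a knot-free vertex deletion set of size at most k. -/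
/-!
Write `A` for `A[U]`, the vertices that reach `U`, and `X` for its complement. No arc leaves `X`,
so a knot of `G − S` inside `X` is the same thing as a knot of `G[X] − S`
(`isKnot_restrict_iff`). Hence a solution `S` of `G` gives the solution `S ∩ X` of `G[X]`.

Conversely let `S ⊆ X` be a solution of `G[X]` with `|S| ≤ k`, and suppose `G − S` has a knot `Q`.
Then `Q` meets `A`. All paths to `U` stay in `A`, hence avoid `S`, so a set closed under the arcs
of `G − S` that meets `A` contains every vertex of `U` it reaches (`mem_of_reaches`); thus
`U ⊆ Q`. As `|N⁺(U)| > k`, some `w ∈ N⁺(U)` is outside `S`, so `w ∈ Q`, and strong connectivity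
of `Q` makes `w` reach `U`. Then `w` lies in the component `U`, a contradiction.
-/

open Relation

variable {V : Type*}

/-- `A[U]` is the set of vertices reaching `U` by a possibly trivial path. -/
lemma mem_ancestors_iff (E : V → V → Prop) (U : Set V) (w : V) :
    w ∈ U ∪ {w | ∃ u ∈ U, TransGen E w u} ↔ ∃ u ∈ U, ReflTransGen E w u := by
  constructor
  · rintro (h | ⟨u, hu, h⟩)
    · exact ⟨w, h, .refl⟩
    · exact ⟨u, hu, h.to_reflTransGen⟩
  · rintro ⟨u, hu, h⟩
    rcases reflTransGen_iff_eq_or_transGen.1 h with rfl | h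
    · exact Or.inl hu
    · exact Or.inr ⟨u, hu, h⟩

/-- For `X` closed under out-neighbors, deleting the vertices outside `X` does not affect
whether a subset of `X` is a knot. -/
lemma isKnot_restrict_iff {E : V → V → Prop} {X Y Q : Set V}
    (hX : ∀ a ∈ X, ∀ b, E a b → b ∈ X) (hQ : Q ⊆ X) :
    IsKnot (Restrict E (X ∩ Y)) Q ↔ IsKnot (Restrict E Y) Q := by
  have hR : Restrict (Restrict E (X ∩ Y)) Q = Restrict (Restrict E Y) Q := by
    funext a b
    apply propext
    constructor
    · rintro ⟨ha, hb, ha', hb', h⟩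
      exact ⟨ha, hb, ha'.2, hb'.2, h⟩
    · rintro ⟨ha, hb, ha', hb', h⟩
      exact ⟨ha, hb, ⟨hQ ha, ha'⟩, ⟨hQ hb, hb'⟩, h⟩
  unfold IsKnot
  rw [hR]
  refine and_congr_right fun _ => and_congr_right fun _ => ?_
  constructor
  · rintro h u hu v ⟨hu', hv', he⟩
    exact h u hu v ⟨⟨hQ hu, hu'⟩, ⟨hX u (hQ hu) v he, hv'⟩, he⟩
  · rintro h u hu v ⟨hu', hv', he⟩
    exact h u hu v ⟨hu'.2, hv'.2, he⟩

/-- If `S` contains no vertex that reaches `u`, then a set closed under the arcs of `G − S`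
contains `u` as soon as it contains a vertex reaching `u` in `G`. -/
lemma mem_of_reaches {E : V → V → Prop} {S Q : Set V} {u a : V}
    (hS : ∀ w, ReflTransGen E w u → w ∉ S)
    (hQ : ∀ x ∈ Q, ∀ y, Restrict E Sᶜ x y → y ∈ Q)
    (h : ReflTransGen E a u) (ha : a ∈ Q) : u ∈ Q := by
  induction h using ReflTransGen.head_induction_on with
  | refl => exact ha
  | head hac hcu ih => exact ih (hQ _ ha _ ⟨hS _ (hcu.head hac), hS _ hcu, hac⟩)

/-- Reduction rule: if `U` is a strongly connected component with more than `k`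
out-neighbors, then `G` has a knot-free vertex deletion set of size at most `k` iff
`G − A[U]` has one. -/
theorem remove_ancestors_of_big_scc {V : Type*} [Fintype V]
    (E : V → V → Prop) (hloopless : ∀ x, ¬ E x x)
    (k : ℕ) (U : Set V) (hU : IsSCC E U) (hout : k < (NOut E U).ncard) :
    (∃ S : Set V, S.ncard ≤ k ∧ IsKFVD E S) ↔
    (∃ S : Set V, S.ncard ≤ k ∧
      IsKFVDOn E (U ∪ {w | ∃ u ∈ U, TransGen E w u})ᶜ S) := by
  set A : Set V := U ∪ {w | ∃ u ∈ U, TransGen E w u} with hA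
  have memA : ∀ w, w ∈ A ↔ ∃ u ∈ U, ReflTransGen E w u := mem_ancestors_iff E U
  have hX : ∀ a ∈ Aᶜ, ∀ b, E a b → b ∈ Aᶜ := by
    intro a ha b hab hb
    obtain ⟨u, hu, h⟩ := (memA b).1 hb
    exact ha ((memA a).2 ⟨u, hu, h.head hab⟩)
  constructor
  · rintro ⟨S, hSk, hS⟩
    refine ⟨Aᶜ ∩ S, (Set.ncard_le_ncard Set.inter_subset_right).trans hSk,
      Set.inter_subset_left, fun Q hQ => ?_⟩
    have hQA : Q ⊆ Aᶜ := hQ.subset.trans Set.sdiff_subset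
    rw [Set.sdiff_self_inter, Set.sdiff_eq, isKnot_restrict_iff hX hQA] at hQ
    exact hS Q hQ
  · rintro ⟨S, hSk, hSX, hS⟩
    refine ⟨S, hSk, fun Q hQ => ?_⟩
    by_cases hQA : Q ⊆ Aᶜ
    · rw [← isKnot_restrict_iff hX hQA, ← Set.sdiff_eq] at hQ
      exact hS Q hQ
    · obtain ⟨q, hq, hqA⟩ := Set.not_subset.1 hQA
      obtain ⟨u, hu, hqu⟩ := (memA q).1 (Set.not_notMem.1 hqA)
      have key : ∀ a ∈ Q, ∀ v ∈ U, ReflTransGen E a v → v ∈ Q := fun a ha v hv h =>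
        mem_of_reaches (fun w hw hwS => hSX hwS ((memA w).2 ⟨v, hv, hw⟩)) hQ.2.2 h ha
      have hUQ : U ⊆ Q := fun v hv => key u (key q hq u hu hqu) v hv (hU.2.1 u hu v hv)
      obtain ⟨w, ⟨⟨v, hv, hvw⟩, hwU⟩, hwS⟩ :=
        Set.exists_mem_notMem_of_ncard_lt_ncard (hSk.trans_lt hout)
      have hwQ : w ∈ Q := hQ.2.2 v (hUQ hv) w ⟨hQ.subset (hUQ hv), hwS, hvw⟩
      refine hwU (hU.2.2 w fun x hx => ⟨(hU.2.1 x hx v hv).tail hvw, ?_⟩)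
      exact ReflTransGen.mono (fun _ _ h => h.2.2.2.2) _ _ (hQ.2.1 w hwQ x (hUQ hx))
end

section
/- Let G be a finite loopless digraph, let S be a knot-free vertex deletion set of G, and let Q be a knot of G. Then S ∩ Q is a knot-free vertex deletion set of the induced subdigraph G[Q]. -/
/-!
A knot `K` of `G[Q] - S` is also a knot of `G - S`. Strong connectivity is inherited, because
the arcs inside `K` are the same in both digraphs. No arc of `G - S` leaves `K`: since `Q` is a
knot of `G`, such an arc would stay inside `Q`, hence be an arc of `G[Q] - S` leaving `K`.
-/

open Relation

variable {V : Type*}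

/-- If `S` is a knot-free vertex deletion set of `G` and `Q` is a knot of `G`, then
`S ∩ Q` is a knot-free vertex deletion set of `G[Q]`. -/
theorem solution_restricted_to_knot {V : Type*} [Fintype V]
    (E : V → V → Prop) (hloopless : ∀ x, ¬ E x x)
    (S : Set V) (hS : IsKFVD E S) (Q : Set V) (hQ : IsKnot E Q) :
    IsKFVDOn E Q (S ∩ Q) := by
  refine ⟨Set.inter_subset_right, ?_⟩
  rintro K ⟨hnt, hconn, hclosed⟩
  -- A vertex of `K` has an out-arc inside `G[Q] - S`, as it reaches another vertex of `K`.
  have hK : ∀ u ∈ K, u ∈ Q ∧ u ∉ S := by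
    intro u hu
    obtain ⟨v, hv, hvu⟩ := hnt.exists_ne u
    rcases (hconn u hu v hv).cases_head with h | ⟨w, hw, -⟩
    · exact absurd h.symm hvu
    · obtain ⟨-, -, ⟨huQ, huS⟩, -, -⟩ := hw
      exact ⟨huQ, fun h => huS ⟨h, huQ⟩⟩
  refine hS K ⟨hnt, fun u hu v hv => ?_, ?_⟩
  · refine ReflTransGen.mono ?_ _ _ (hconn u hu v hv)
    rintro a b ⟨ha, hb, -, -, hab⟩
    exact ⟨ha, hb, (hK a ha).2, (hK b hb).2, hab⟩
  · rintro u hu v ⟨-, hvS, huv⟩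
    -- The arc `u v` cannot leave `Q`, so it survives in `G[Q] - S`.
    have hvQ : v ∈ Q := hQ.2.2 u (hK u hu).1 v huv
    exact hclosed u hu v
      ⟨⟨(hK u hu).1, fun h => (hK u hu).2 h.1⟩, ⟨hvQ, fun h => hvS h.1⟩, huv⟩
end

section
/- Let G be a finite loopless digraph and let X ⊆ V(G) be such that every arc of G whose two endpoints lie in different strongly connected components of G has both endpoints in X. Let Q_1, …, Q_t be the knots of G, and for each i let S_i ⊆ Q_i ∖ X be a knot-free vertex deletion set of G[Q_i]. Then S = S_1 ∪ ⋯ ∪ S_t is a knot-free vertex deletion set of G. -/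
/-! Let `K` be a knot of `G − S`, where `S` is the union of the sets `S Q`. All vertices of `K`
avoid `S`, and an arc of `G` can leave `K` only into `S`.

If `K` meets a knot `Q` of `G`, then `K ⊆ Q`, since `K` is strongly connected and `Q` is closed
under arcs. Distinct knots of `G` are disjoint, so the vertices of `Q` deleted by `S` are exactly
those of `S Q`; hence `K` is a knot of `G[Q] − S Q`, which is impossible.

If `K` meets no knot of `G`, then no arc of `G` leaves `K`: such an arc `uv` would end in some
`S Q`, with `u ∉ Q`, so that `v ∈ Q` does not reach `u`; the arc then joins different strong
components, and `v ∈ X` contradicts `S Q ∩ X = ∅`. So `K` is itself a knot of `G`, which is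
absurd. -/


open Relation

variable {V : Type*}

lemma mem_of_reflTransGen_of_closed {E : V → V → Prop} {Q : Set V}
    (hQ : ∀ u ∈ Q, ∀ v, E u v → v ∈ Q) {u v : V} (hu : u ∈ Q) (h : ReflTransGen E u v) :
    v ∈ Q := by
  induction h with
  | refl => exact hu
  | tail _ h ih => exact hQ _ ih _ h

lemma IsKnot.reach {E : V → V → Prop} {Q : Set V} (hQ : IsKnot E Q) {u v : V}
    (hu : u ∈ Q) (hv : v ∈ Q) : ReflTransGen E u v :=
  ReflTransGen.mono (fun _ _ h => h.2.2) _ _ (hQ.2.1 u hu v hv)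

/-- A knot of a subdigraph `F` of `E` that meets an arc-closed set of `E` lies inside that set. -/
lemma IsKnot.subset_of_closed {E F : V → V → Prop} {K Q : Set V} (hK : IsKnot F K)
    (hFE : ∀ a b, F a b → E a b) (hQ : ∀ u ∈ Q, ∀ v, E u v → v ∈ Q) {x : V}
    (hxK : x ∈ K) (hxQ : x ∈ Q) : K ⊆ Q := fun _ hy =>
  mem_of_reflTransGen_of_closed hQ hxQ (ReflTransGen.mono hFE _ _ (hK.reach hxK hy))

lemma IsKnot.eq_of_mem {E : V → V → Prop} {P Q : Set V} (hP : IsKnot E P) (hQ : IsKnot E Q)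
    {x : V} (hxP : x ∈ P) (hxQ : x ∈ Q) : P = Q :=
  (hP.subset_of_closed (fun _ _ h => h) hQ.2.2 hxP hxQ).antisymm
    (hQ.subset_of_closed (fun _ _ h => h) hP.2.2 hxQ hxP)

/-- A knot of an induced subdigraph consists of vertices of that subdigraph, because every vertex
of a knot is the tail of an arc. -/
lemma IsKnot.subset_of_restrict {E : V → V → Prop} {K Y : Set V}
    (hK : IsKnot (Restrict E Y) K) : K ⊆ Y := by
  intro x hx
  obtain ⟨y, hy, hyx⟩ := hK.1.exists_ne x
  rcases (hK.reach hx hy).cases_head with h | ⟨z, h, _⟩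
  · exact absurd h.symm hyx
  · exact h.1

/-- If every arc between different strongly connected components of `G` has both
endpoints in `X`, and for every knot `Q` of `G` we have a knot-free vertex deletion
set `S Q ⊆ Q ∖ X` of `G[Q]`, then the union of these sets over all knots is a
knot-free vertex deletion set of `G`. -/
theorem union_of_knot_solutions {V : Type*} [Fintype V]
    (E : V → V → Prop) (hloopless : ∀ x, ¬ E x x)
    (X : Set V)
    (hX : ∀ u v, E u v → ¬ ReflTransGen E v u → u ∈ X ∧ v ∈ X)
    (S : Set V → Set V)
    (hS : ∀ Q : Set V, IsKnot E Q → S Q ⊆ Q \ X ∧ IsKFVDOn E Q (S Q)) :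
    IsKFVD E (⋃ Q ∈ {Q : Set V | IsKnot E Q}, S Q) := by
  intro K hK
  have hKS := hK.subset_of_restrict
  by_cases hmeet : ∃ Q, IsKnot E Q ∧ (K ∩ Q).Nonempty
  · obtain ⟨Q, hQ, x, hxK, hxQ⟩ := hmeet
    have hKQ : K ⊆ Q := hK.subset_of_closed (fun _ _ h => h.2.2) hQ.2.2 hxK hxQ
    have hKQS : K ⊆ Q \ S Q := fun y hy =>
      ⟨hKQ hy, fun hyS => hKS hy (Set.mem_biUnion hQ hyS)⟩
    refine (hS Q hQ).2.2 K ⟨hK.1, fun u hu v hv => ReflTransGen.mono ?_ _ _ (hK.2.1 u hu v hv), ?_⟩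
    · rintro a b ⟨ha, hb, h⟩
      exact ⟨ha, hb, hKQS ha, hKQS hb, h.2.2⟩
    · rintro u hu v ⟨_, hv, huv⟩
      refine hK.2.2 u hu v ⟨hKS hu, fun hvS => ?_, huv⟩
      obtain ⟨P, hP, hvP⟩ := Set.mem_iUnion₂.1 hvS
      obtain rfl : P = Q := IsKnot.eq_of_mem hP hQ ((hS P hP).1 hvP).1 hv.1
      exact hv.2 hvP
  · refine hmeet ⟨K, ⟨hK.1, fun u hu v hv => ReflTransGen.mono ?_ _ _ (hK.2.1 u hu v hv), ?_⟩, ?_⟩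
    · rintro a b ⟨ha, hb, h⟩
      exact ⟨ha, hb, h.2.2⟩
    · intro u hu v huv
      refine hK.2.2 u hu v ⟨hKS hu, fun hvS => ?_, huv⟩
      obtain ⟨P, hP, hvP⟩ := Set.mem_iUnion₂.1 hvS
      obtain ⟨hvQ, hvX⟩ := (hS P hP).1 hvP
      refine hvX (hX u v huv fun hvu => hmeet ⟨P, hP, u, hu, ?_⟩).2
      exact mem_of_reflTransGen_of_closed hP.2.2 hvQ hvu
    · exact ⟨_, hK.1.nonempty.some_mem, hK.1.nonempty.some_mem⟩
end

section
/- Let G be a finite loopless digraph and let R ⊆ V(G) be such that G[R] contains no directed cycle. Let P be a directed path of G all of whose vertices lie in R. Let S be a knot-free vertex deletion set of G of minimum size, and let Z be the set of sinks of G−S. Then |Z ∩ V(P)| ≤ 1. -/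
/-!
In a finite loopless digraph, being knot-free is the same as every vertex reaching a sink: a
reachability set of minimum size is either a single sink or a knot (`exists_sink_of_knotFree`),
and a knot cannot reach a sink (`knotFree_of_reach_sinks`).

Suppose two distinct sinks `u`, `v` of `G - S` lie on the path, `u` before `v`. The successor of
`u` on the path lies in `S`, so there is a last vertex `w ∈ S` on the segment from `u` to `v`
(`exists_last_in_deleted`). Put `w` back, i.e. delete only `S \ {w}`. Now `w` reaches `v` along the
path, and `v` is still a sink, since an arc `v → w` would close a directed cycle inside `R`. Any
other vertex reaches an old sink `z` of `G - S`; either `z` is still a sink, or `z → w` is an arc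
and then `z` reaches `v` through `w`. So `S \ {w}` is a smaller knot-free vertex deletion set,
contradicting minimality.
-/

open Relation

variable {V : Type*}

lemma restrict_mono (E : V → V → Prop) {X Y : Set V} (h : X ⊆ Y) {a b : V}
    (hab : ReflTransGen (Restrict E X) a b) : ReflTransGen (Restrict E Y) a b :=
  hab.lift id fun _ _ ⟨h1, h2, h3⟩ => ⟨h h1, h h2, h3⟩

lemma mem_of_reach (E : V → V → Prop) {X : Set V} {a b : V} (ha : a ∈ X)
    (hab : ReflTransGen (Restrict E X) a b) : b ∈ X := by
  induction hab with
  | refl => exact ha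
  | tail _ h _ => exact h.2.1

/-- The witness is a vertex reachable from `a` whose own reachability set has minimum size. -/
lemma exists_sink_of_knotFree [Finite V] (E : V → V → Prop) (hl : ∀ x, ¬ E x x) {X : Set V}
    (hK : KnotFree (Restrict E X)) {a : V} (ha : a ∈ X) :
    ∃ z ∈ Sinks E X, ReflTransGen (Restrict E X) a z := by
  obtain ⟨b, hb, hbmin⟩ := Set.exists_min_image {b | ReflTransGen (Restrict E X) a b}
    (fun b => {c | ReflTransGen (Restrict E X) b c}.ncard) (Set.toFinite _) ⟨a, .refl⟩
  -- By minimality, every vertex reachable from `b` reaches back to `b`.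
  have hback : ∀ c, ReflTransGen (Restrict E X) b c → ReflTransGen (Restrict E X) c b := by
    intro c hc
    have heq := Set.eq_of_subset_of_ncard_le (s := {d | ReflTransGen (Restrict E X) c d})
      (t := {d | ReflTransGen (Restrict E X) b d}) (fun d hd => hc.trans hd)
      (hbmin c (ReflTransGen.trans hb hc)) (Set.toFinite _)
    have : b ∈ {d | ReflTransGen (Restrict E X) b d} := .refl
    rwa [← heq] at this
  refine ⟨b, ⟨mem_of_reach E ha hb, fun w hw hE => ?_⟩, hb⟩
  have hbX := mem_of_reach E ha hb
  refine hK {c | ReflTransGen (Restrict E X) b c} ⟨⟨b, .refl, w, .single ⟨hbX, hw, hE⟩, ?_⟩, ?_, ?_⟩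
  · rintro rfl
    exact hl _ hE
  · intro u hu v hv
    have huv : ReflTransGen (Restrict E X) u v := (hback u hu).trans hv
    clear hv
    induction huv with
    | refl => exact .refl
    | tail h1 h2 ih =>
      exact ih.tail ⟨ReflTransGen.trans hu h1, (ReflTransGen.trans hu h1).tail h2, h2⟩
  · intro u hu v huv
    exact ReflTransGen.tail hu huv

/-- Every vertex of a knot has an out-neighbour, and a knot is closed under reachability, so no
vertex of it reaches a sink. -/
lemma knotFree_of_reach_sinks (E : V → V → Prop) {X : Set V}
    (h : ∀ a ∈ X, ∃ z ∈ Sinks E X, ReflTransGen (Restrict E X) a z) :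
    KnotFree (Restrict E X) := by
  rintro Q ⟨hnt, hconn, hclosed⟩
  have hout : ∀ u ∈ Q, ∃ w, Restrict E X u w := by
    intro u hu
    obtain ⟨v, hv, hne⟩ := hnt.exists_ne u
    rcases (hconn u hu v hv).cases_head with rfl | ⟨w, hw, _⟩
    · exact absurd rfl hne
    · exact ⟨w, hw.2.2⟩
  obtain ⟨u, hu⟩ := hnt.nonempty
  obtain ⟨w, hw⟩ := hout u hu
  obtain ⟨z, hz, huz⟩ := h u hw.1
  have hzQ : z ∈ Q := by
    clear hz
    induction huz with
    | refl => exact hu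
    | tail _ h2 ih => exact hclosed _ ih _ h2
  obtain ⟨y, hy⟩ := hout z hzQ
  exact hz.2 y hy.2.1 hy.2.2

/-- A walk in `R` ending outside `S` either avoids `S` entirely or has a last vertex `w` in `S`. -/
lemma exists_last_in_deleted (E : V → V → Prop) {R S : Set V} {u v : V} (hv : v ∉ S)
    (h : ReflTransGen (Restrict E R) u v) :
    ReflTransGen (Restrict E (R ∩ Sᶜ)) u v ∨
      ∃ w ∈ S, ∃ y, y ∉ S ∧ Restrict E R w y ∧ ReflTransGen (Restrict E (R ∩ Sᶜ)) y v := by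
  induction h using ReflTransGen.head_induction_on with
  | refl => exact .inl .refl
  | @head a c hac hcv ih =>
    rcases ih with ih | ih
    · have hc : c ∉ S := by
        rcases ih.cases_head with rfl | ⟨d, hd, _⟩
        · exact hv
        · exact hd.1.2
      by_cases ha : a ∈ S
      · exact .inr ⟨a, ha, c, hc, hac, ih⟩
      · exact .inl (ih.head ⟨⟨hac.1, ha⟩, ⟨hac.2.1, hc⟩, hac.2.2⟩)
    · exact .inr ih

/-- The exchange argument: in a minimum solution, no sink reaches another one inside `R`. -/
lemma eq_of_sinks_of_reach [Finite V] (E : V → V → Prop) (hl : ∀ x, ¬ E x x) {R : Set V}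
    (hR : ¬ HasCycleIn E R) {S : Set V} (hS : IsKFVD E S)
    (hmin : ∀ S' : Set V, IsKFVD E S' → S.ncard ≤ S'.ncard) {u v : V}
    (hu : u ∈ Sinks E Sᶜ) (hv : v ∈ Sinks E Sᶜ) (h : ReflTransGen (Restrict E R) u v) :
    u = v := by
  rcases exists_last_in_deleted E hv.1 h with h | ⟨w, hwS, y, hyS, hwy, hyv⟩
  · rcases h.cases_head with rfl | ⟨d, hd, _⟩
    · rfl
    · exact absurd hd.2.2 (hu.2 d hd.2.1.2)
  exfalso
  have hsub : Sᶜ ⊆ (S \ {w})ᶜ := fun x hx hx' => hx hx'.1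
  have hw' : w ∈ (S \ {w})ᶜ := fun hx => hx.2 rfl
  have hcase : ∀ x ∈ (S \ {w})ᶜ, x = w ∨ x ∈ Sᶜ := by
    intro x hx
    by_contra! hcon
    exact hx ⟨not_not.mp hcon.2, hcon.1⟩
  have hvR : v ∈ R := mem_of_reach E hwy.2.1 (restrict_mono E Set.inter_subset_left hyv)
  have hvsink : v ∈ Sinks E (S \ {w})ᶜ := by
    refine ⟨hsub hv.1, fun x hx hvx => ?_⟩
    rcases hcase x hx with rfl | hx
    · exact hR ⟨v, x, ⟨hvR, hwy.1, hvx⟩,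
        (restrict_mono E Set.inter_subset_left hyv).head hwy⟩
    · exact hv.2 x hx hvx
  have hwv : ReflTransGen (Restrict E (S \ {w})ᶜ) w v :=
    (restrict_mono E (Set.inter_subset_right.trans hsub) hyv).head ⟨hw', hsub hyS, hwy.2.2⟩
  have hS' : IsKFVD E (S \ {w}) := by
    refine knotFree_of_reach_sinks E fun a ha => ?_
    rcases hcase a ha with rfl | ha
    · exact ⟨v, hvsink, hwv⟩
    obtain ⟨z, hz, haz⟩ := exists_sink_of_knotFree E hl hS ha
    have haz' := restrict_mono E hsub haz
    by_cases hzw : E z w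
    · exact ⟨v, hvsink, haz'.trans (hwv.head ⟨hsub hz.1, hw', hzw⟩)⟩
    · refine ⟨z, ⟨hsub hz.1, fun x hx hzx => ?_⟩, haz'⟩
      rcases hcase x hx with rfl | hx
      · exact hzw hzx
      · exact hz.2 x hx hzx
  exact absurd (Set.ncard_sdiff_singleton_lt_of_mem hwS (Set.toFinite _))
    (not_lt.mpr (hmin _ hS'))

lemma pairwise_reach_of_chain (E : V → V → Prop) {R : Set V} (p : List V)
    (hchain : p.IsChain E) (hpR : ∀ v ∈ p, v ∈ R) :
    p.Pairwise (ReflTransGen (Restrict E R)) := by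
  refine List.IsChain.pairwise ?_
  induction p with
  | nil => exact .nil
  | cons a l ih =>
    rw [List.isChain_cons] at hchain ⊢
    refine ⟨fun y hy => .single ⟨hpR a (by simp), ?_, hchain.1 y hy⟩,
      ih hchain.2 fun v hv => hpR v (by simp [hv])⟩
    exact hpR y (List.mem_cons_of_mem _ (List.mem_of_mem_head? hy))

/-- Single sink along a path: if `G[R]` is acyclic, `P` is a directed path of `G`
inside `R`, and `S` is a minimum knot-free vertex deletion set with set of sinks `Z`
in `G − S`, then `|Z ∩ V(P)| ≤ 1`. -/
theorem single_sink_along_path {V : Type*} [Fintype V] [DecidableEq V]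
    (E : V → V → Prop) (hloopless : ∀ x, ¬ E x x)
    (R : Set V) (hR : ¬ HasCycleIn E R)
    (p : List V) (hchain : p.Chain' E) (hpR : ∀ v ∈ p, v ∈ R)
    (S : Set V) (hS : IsKFVD E S)
    (hmin : ∀ S' : Set V, IsKFVD E S' → S.ncard ≤ S'.ncard) :
    (Sinks E Sᶜ ∩ {v : V | v ∈ p}).ncard ≤ 1 := by
  refine (Set.ncard_le_one (Set.toFinite _)).mpr ?_
  rintro u ⟨hu, hup⟩ v ⟨hv, hvp⟩
  by_contra hne
  have hsymm : p.Pairwise fun a b =>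
      ReflTransGen (Restrict E R) a b ∨ ReflTransGen (Restrict E R) b a :=
    (pairwise_reach_of_chain E p hchain hpR).imp Or.inl
  haveI : Std.Symm fun a b : V =>
      ReflTransGen (Restrict E R) a b ∨ ReflTransGen (Restrict E R) b a := ⟨fun _ _ h => h.symm⟩
  rcases hsymm.forall hup hvp hne with h | h
  · exact hne (eq_of_sinks_of_reach E hloopless hR hS hmin hu hv h)
  · exact hne (eq_of_sinks_of_reach E hloopless hR hS hmin hv hu h).symm
end

section
/- Let G be a finite loopless digraph, let v ∈ V(G), and let G/v be the digraph obtained from G by deleting v and adding an arc from u to w for every in-neighbor u of v and every out-neighbor w of v with u ≠ w (keeping all arcs of G not incident to v). If S is a knot-free vertex deletion set of G such that v ∉ S and v is not a sink of G−S, then S is a knot-free vertex deletion set of G/v. -/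
/-!
A knot `Q` of `G/v − S` yields a knot of `G − S`. If no vertex of `Q` has an arc to `v`, no arc
inside `Q` was created by the contraction, and `Q` itself is a knot of `G − S`. Otherwise some
`u ∈ Q` has an arc to `v`, and `Q ∪ {v}` is a knot of `G − S`: a new arc `a → b` is replaced by the
path `a → v → b`; every out-neighbor of `v` in `G − S` is `u` or an out-neighbor of `u` in `G/v`,
hence lies in `Q`; and `v` has such an out-neighbor because it is not a sink of `G − S`.
-/

open Relation

variable {V : Type*}

/-- The digraph `G/v` obtained from `G` by deleting `v` and adding an arc `u → w`
for every in-neighbor `u` of `v` and every out-neighbor `w` of `v` with `u ≠ w`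
(all arcs of `G` not incident to `v` are kept). -/
def Contract (E : V → V → Prop) (v : V) : V → V → Prop :=
  fun a b => a ≠ v ∧ b ≠ v ∧ (E a b ∨ (E a v ∧ E v b ∧ a ≠ b))

/-- If `S` is a knot-free vertex deletion set of `G` such that `v ∉ S` and `v` is not
a sink of `G − S`, then `S` is a knot-free vertex deletion set of `G/v`. -/
theorem solution_of_contraction {V : Type*} [Fintype V]
    (E : V → V → Prop) (hloopless : ∀ x, ¬ E x x) (v : V)
    (S : Set V) (hS : IsKFVD E S) (hv : v ∉ S) (hsink : v ∉ Sinks E Sᶜ) :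
    IsKFVD (Contract E v) S := by
  rintro Q ⟨hnt, hconn, hclosed⟩
  -- Every vertex of `Q` has an out-arc in `G/v − S`, since it reaches another vertex of `Q`.
  have hmem : ∀ q ∈ Q, q ∈ Sᶜ ∧ q ≠ v := by
    intro q hq
    obtain ⟨q', hq', hne⟩ := hnt.exists_ne q
    rcases (hconn q hq q' hq').cases_head with h | ⟨c, hc, -⟩
    · exact absurd h.symm hne
    · exact ⟨hc.2.2.1, hc.2.2.2.2.1⟩
  by_cases hu : ∃ u ∈ Q, E u v
  · obtain ⟨u, huQ, huv⟩ := hu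
    -- Out-neighbors of `v` in `G − S` lie in `Q`.
    have hvout : ∀ w ∈ Sᶜ, E v w → w ∈ Q := by
      intro w hwS hvw
      by_cases huw : u = w
      · exact huw ▸ huQ
      · have hwv : w ≠ v := by
          rintro rfl
          exact hloopless _ hvw
        exact hclosed u huQ w
          ⟨(hmem u huQ).1, hwS, (hmem u huQ).2, hwv, Or.inr ⟨huv, hvw, huw⟩⟩
    obtain ⟨w, hwS, hvw⟩ : ∃ w ∈ Sᶜ, E v w := by
      by_contra hcon
      push Not at hcon
      exact hsink ⟨hv, hcon⟩
    have hwQ := hvout w hwS hvw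
    have hinQ : ∀ a ∈ Q, ∀ b ∈ Q,
        ReflTransGen (Restrict (Restrict E Sᶜ) (insert v Q)) a b := by
      intro a ha b hb
      refine ReflTransGen.trans_induction_on (hconn a ha b hb) (fun _ => .refl) ?_
        (fun _ _ h₁ h₂ => h₁.trans h₂)
      rintro x y ⟨hx, hy, hxS, hyS, -, -, h | ⟨hxv, hvy, -⟩⟩
      · exact .single ⟨.inr hx, .inr hy, hxS, hyS, h⟩
      · exact .tail (.single ⟨.inr hx, .inl rfl, hxS, hv, hxv⟩)
          ⟨.inl rfl, .inr hy, hv, hyS, hvy⟩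
    have htov : ∀ a ∈ Q, ReflTransGen (Restrict (Restrict E Sᶜ) (insert v Q)) a v :=
      fun a ha => (hinQ a ha u huQ).tail
        ⟨.inr huQ, .inl rfl, (hmem u huQ).1, hv, huv⟩
    have hfromv : ∀ b ∈ Q, ReflTransGen (Restrict (Restrict E Sᶜ) (insert v Q)) v b :=
      fun b hb => .head ⟨.inl rfl, .inr hwQ, hv, hwS, hvw⟩ (hinQ w hwQ b hb)
    refine hS (insert v Q) ⟨hnt.mono (Set.subset_insert v Q), ?_, ?_⟩
    · rintro a (rfl | ha) b (rfl | hb)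
      · exact .refl
      · exact hfromv b hb
      · exact htov a ha
      · exact hinQ a ha b hb
    · rintro a (rfl | ha) b ⟨haS, hbS, hab⟩
      · exact .inr (hvout b hbS hab)
      · by_cases hbv : b = v
        · exact .inl hbv
        · exact .inr (hclosed a ha b ⟨haS, hbS, (hmem a ha).2, hbv, .inl hab⟩)
  · push Not at hu
    refine hS Q ⟨hnt, ?_, ?_⟩
    · intro a ha b hb
      refine ReflTransGen.mono ?_ a b (hconn a ha b hb)
      rintro x y ⟨hx, hy, hxS, hyS, -, -, h | ⟨hxv, -, -⟩⟩
      · exact ⟨hx, hy, hxS, hyS, h⟩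
      · exact absurd hxv (hu x hx)
    · rintro a ha b ⟨haS, hbS, hab⟩
      have hbv : b ≠ v := by
        rintro rfl
        exact hu a ha hab
      exact hclosed a ha b ⟨haS, hbS, (hmem a ha).2, hbv, .inl hab⟩
end

section
/- Let H be a finite undirected graph whose vertex set is partitioned into k color classes V¹, …, Vᵏ. Construct a loopless digraph G as follows: for each vertex vᵢ of H, create two vertices wᵢ and zᵢ with arcs wᵢ→zᵢ and zᵢ→wᵢ; for each color class Vʲ create a vertex uⱼ, with arcs zᵢ→uⱼ and uⱼ→zᵢ and uⱼ→wᵢ for every vᵢ ∈ Vʲ; for each edge e_p = {vᵢ, v_l} of H create two vertices xᵢ_p and x^l_p with arcs xᵢ_p→x^l_p and x^l_p→xᵢ_p, together with arcs xᵢ_p→zᵢ and x^l_p→z_l. Then H has an independent set containing exactly one vertex from each color class V¹, …, Vᵏ if and only if G has a knot-free vertex deletion set of size at most k. -/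
/-!
Call `{u_j} ∪ {w_a, z_a | c a = j}` the gadget of the class `j`; no arc leaves it.

Given a multicolored independent set `T`, the set `S = {z_a | a ∈ T}` works. After its deletion
`w_a` is a sink for `a ∈ T`, hence every vertex `u_j` has an arc to a sink, and every other remaining
vertex reaches some `u_j`; for an edge gadget this uses that one of the two endpoints lies outside
`T`. Sinks lie in no knot (`IsKnot.not_mem_of_sink`), and neither do the tails of arcs whose heads
are outside the knot (`IsKnot.not_mem_of_arc`), so there is no knot.

Conversely, let `S` be a solution of size at most `k`. If neither `u_j` nor any `z_a` with `c a = j`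
is deleted, then what is left of the gadget of `j` is a knot (`exists_mem_of_isKFVD`). So `S` meets
each of the `k` disjoint gadgets in exactly one vertex, which is `u_j` or some `z_a`, and contains
nothing else. It cannot be `u_j`, for then `{w_a, z_a}` is a knot; hence it is some `z_{a_j}`.
If `a_i` and `a_j` were adjacent, the two vertices of their edge gadget would form a knot.
Thus `{a_j}` is independent.
-/

open Relation

variable {V : Type*}

/-- The digraph of the reduction from Multicolored Independent Set: vertices are
`w`-vertices (`Sum.inl a`), `z`-vertices (`Sum.inr (Sum.inl a)`), class vertices
`u j` (`Sum.inr (Sum.inr (Sum.inl j))`) and, for each edge `{a, b}` of `H`, the two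
gadget vertices `x^a` and `x^b` given by the adjacent ordered pairs `(a, b)` and
`(b, a)`. -/
def RedArc {α : Type*} {k : ℕ} (H : SimpleGraph α) (c : α → Fin k) :
    (α ⊕ α ⊕ Fin k ⊕ {e : α × α // H.Adj e.1 e.2}) →
      (α ⊕ α ⊕ Fin k ⊕ {e : α × α // H.Adj e.1 e.2}) → Prop
  | Sum.inl a, Sum.inr (Sum.inl b) => a = b                          -- w_a → z_a
  | Sum.inr (Sum.inl a), Sum.inl b => a = b                          -- z_a → w_a
  | Sum.inr (Sum.inl a), Sum.inr (Sum.inr (Sum.inl j)) => c a = j    -- z_a → u_j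
  | Sum.inr (Sum.inr (Sum.inl j)), Sum.inr (Sum.inl a) => c a = j    -- u_j → z_a
  | Sum.inr (Sum.inr (Sum.inl j)), Sum.inl a => c a = j              -- u_j → w_a
  | Sum.inr (Sum.inr (Sum.inr e)), Sum.inr (Sum.inr (Sum.inr f)) =>
      e.val.1 = f.val.2 ∧ e.val.2 = f.val.1  -- x^a ↔ x^b
  | Sum.inr (Sum.inr (Sum.inr e)), Sum.inr (Sum.inl a) => e.val.1 = a -- x^a → z_a
  | _, _ => False

theorem IsKnot.not_mem_of_sink {E : V → V → Prop} {Q : Set V} (hQ : IsKnot E Q) {t : V}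
    (ht : ∀ v, ¬ E t v) : t ∉ Q := by
  intro htQ
  obtain ⟨q, hq, hne⟩ := hQ.1.exists_ne t
  rcases (hQ.2.1 t htQ q hq).cases_head with h | ⟨v, hv, -⟩
  · exact hne h.symm
  · exact ht v hv.2.2

theorem IsKnot.not_mem_of_arc {E : V → V → Prop} {Q : Set V} (hQ : IsKnot E Q) {p q : V}
    (hpq : E p q) (hq : q ∉ Q) : p ∉ Q :=
  fun hp => hq (hQ.2.2 p hp q hpq)

/-- A surviving 2-cycle all of whose other out-neighbors are deleted is a knot. -/
theorem not_isKFVD_of_two_cycle {E : V → V → Prop} {S : Set V} {p q : V} (hne : p ≠ q)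
    (hp : p ∉ S) (hq : q ∉ S) (hpq : E p q) (hqp : E q p)
    (hpo : ∀ v, E p v → v ∉ S → v = p ∨ v = q)
    (hqo : ∀ v, E q v → v ∉ S → v = p ∨ v = q) : ¬ IsKFVD E S := by
  intro h
  refine h {p, q} ⟨⟨p, by simp, q, by simp, hne⟩, ?_, ?_⟩
  · have h1 : Restrict (Restrict E Sᶜ) {p, q} p q := ⟨by simp, by simp, hp, hq, hpq⟩
    have h2 : Restrict (Restrict E Sᶜ) {p, q} q p := ⟨by simp, by simp, hq, hp, hqp⟩
    rintro u (rfl | rfl) v (rfl | rfl)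
    · exact .refl
    · exact .single h1
    · exact .single h2
    · exact .refl
  · rintro u (rfl | rfl) v ⟨-, hv, huv⟩
    · exact hpo v huv hv
    · exact hqo v huv hv

/-- The color class whose gadget contains a given vertex of the reduction digraph; the edge
gadget vertices belong to none. -/
def gadgetClass {α : Type*} {k : ℕ} (H : SimpleGraph α) (c : α → Fin k) :
    (α ⊕ α ⊕ Fin k ⊕ {e : α × α // H.Adj e.1 e.2}) → Option (Fin k)
  | Sum.inl a => some (c a)
  | Sum.inr (Sum.inl a) => some (c a)
  | Sum.inr (Sum.inr (Sum.inl j)) => some j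
  | Sum.inr (Sum.inr (Sum.inr _)) => none

/-- No arc leaves a class gadget. -/
theorem gadgetClass_of_arc {α : Type*} {k : ℕ} (H : SimpleGraph α) (c : α → Fin k) {j : Fin k}
    {u v : α ⊕ α ⊕ Fin k ⊕ {e : α × α // H.Adj e.1 e.2}} (hu : gadgetClass H c u = some j)
    (huv : RedArc H c u v) : gadgetClass H c v = some j := by
  rcases u with a | a | i | e <;> rcases v with b | b | i' | e' <;>
    simp only [RedArc, gadgetClass, Option.some.injEq, reduceCtorEq] at hu huv ⊢ <;>
    simp_all only

/-- Deleting only `w`-vertices from a class gadget leaves a knot: `u_j` has arcs to everything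
left, and everything left reaches `u_j` through `z`-vertices. -/
theorem exists_mem_of_isKFVD {α : Type*} {k : ℕ} (H : SimpleGraph α) (c : α → Fin k)
    (hc : Function.Surjective c)
    {S : Set (α ⊕ α ⊕ Fin k ⊕ {e : α × α // H.Adj e.1 e.2})} (hS : IsKFVD (RedArc H c) S)
    (j : Fin k) :
    ∃ s ∈ S, s = Sum.inr (Sum.inr (Sum.inl j)) ∨ ∃ a, c a = j ∧ s = Sum.inr (Sum.inl a) := by
  by_contra! hcon
  have hu : (Sum.inr (Sum.inr (Sum.inl j)) :
      α ⊕ α ⊕ Fin k ⊕ {e : α × α // H.Adj e.1 e.2}) ∉ S := fun h => (hcon _ h).1 rfl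
  have hz : ∀ a, c a = j → (Sum.inr (Sum.inl a) :
      α ⊕ α ⊕ Fin k ⊕ {e : α × α // H.Adj e.1 e.2}) ∉ S := fun a ha h => (hcon _ h).2 a ha rfl
  let Q : Set (α ⊕ α ⊕ Fin k ⊕ {e : α × α // H.Adj e.1 e.2}) :=
    {v | v ∉ S ∧ gadgetClass H c v = some j}
  have step : ∀ u v, u ∈ Q → v ∈ Q → RedArc H c u v →
      Restrict (Restrict (RedArc H c) Sᶜ) Q u v :=
    fun u v hu hv h => ⟨hu, hv, hu.1, hv.1, h⟩
  have huQ : Sum.inr (Sum.inr (Sum.inl j)) ∈ Q := ⟨hu, rfl⟩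
  have hzQ : ∀ a, c a = j → Sum.inr (Sum.inl a) ∈ Q :=
    fun a ha => ⟨hz a ha, congrArg some ha⟩
  have to_u : ∀ v ∈ Q, ReflTransGen (Restrict (Restrict (RedArc H c) Sᶜ) Q) v
      (Sum.inr (Sum.inr (Sum.inl j))) := by
    rintro (a | a | i | e) hv
    · have ha : c a = j := Option.some.inj hv.2
      exact .head (step _ (Sum.inr (Sum.inl a)) hv (hzQ a ha) rfl)
        (.single (step _ _ (hzQ a ha) huQ ha))
    · exact .single (step _ _ hv huQ (Option.some.inj hv.2))
    · obtain rfl : i = j := Option.some.inj hv.2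
      exact .refl
    · exact absurd hv.2 (by simp [gadgetClass])
  have from_u : ∀ v ∈ Q, ReflTransGen (Restrict (Restrict (RedArc H c) Sᶜ) Q)
      (Sum.inr (Sum.inr (Sum.inl j))) v := by
    rintro (a | a | i | e) hv
    · exact .single (step _ _ huQ hv (Option.some.inj hv.2))
    · exact .single (step _ _ huQ hv (Option.some.inj hv.2))
    · obtain rfl : i = j := Option.some.inj hv.2
      exact .refl
    · exact absurd hv.2 (by simp [gadgetClass])
  obtain ⟨a₀, ha₀⟩ := hc j
  refine hS Q ⟨⟨_, huQ, _, hzQ a₀ ha₀, by simp⟩,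
    fun u hu v hv => (to_u u hu).trans (from_u v hv), ?_⟩
  rintro u hu v ⟨-, hv, huv⟩
  refine ⟨hv, ?_⟩
  exact gadgetClass_of_arc H c hu.2 huv

/-- The `z`-vertices of a multicolored independent set form a solution. -/
theorem isKFVD_of_independent {α : Type*} {k : ℕ} (H : SimpleGraph α) (c : α → Fin k)
    (T : Finset α) (hT : ∀ j : Fin k, ∃ a, a ∈ T ∧ c a = j)
    (hind : ∀ a ∈ T, ∀ b ∈ T, ¬ H.Adj a b) :
    IsKFVD (RedArc H c) ((fun a => Sum.inr (Sum.inl a)) '' (T : Set α)) := by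
  intro Q hQ
  set S : Set (α ⊕ α ⊕ Fin k ⊕ {e : α × α // H.Adj e.1 e.2}) :=
    (fun a => Sum.inr (Sum.inl a)) '' (T : Set α) with hSdef
  have hzS : ∀ a, Sum.inr (Sum.inl a) ∈ S ↔ a ∈ T := fun a => by simp [hSdef]
  have hwS : ∀ a, Sum.inl a ∉ S := fun a => by simp [hSdef]
  have huS : ∀ j, Sum.inr (Sum.inr (Sum.inl j)) ∉ S := fun a => by simp [hSdef]
  have hxS : ∀ e, Sum.inr (Sum.inr (Sum.inr e)) ∉ S := fun a => by simp [hSdef]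
  have hwT : ∀ a ∈ T, Sum.inl a ∉ Q := by
    intro a ha
    refine hQ.not_mem_of_sink ?_
    rintro (b | b | i | e) ⟨-, hb, hab⟩
    · exact hab
    · obtain rfl : a = b := hab
      exact hb ((hzS a).2 ha)
    · exact hab
    · exact hab
  have hu : ∀ j, Sum.inr (Sum.inr (Sum.inl j)) ∉ Q := by
    intro j
    obtain ⟨a, ha, haj⟩ := hT j
    exact hQ.not_mem_of_arc (q := Sum.inl a) ⟨huS j, hwS a, haj⟩ (hwT a ha)
  have hz : ∀ a, Sum.inr (Sum.inl a) ∉ Q := by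
    intro a
    by_cases ha : a ∈ T
    · exact hQ.not_mem_of_sink fun v hv => hv.1 ((hzS a).2 ha)
    · exact hQ.not_mem_of_arc (q := Sum.inr (Sum.inr (Sum.inl (c a))))
        ⟨fun h => ha ((hzS a).1 h), huS _, rfl⟩ (hu _)
  have hw : ∀ a, Sum.inl a ∉ Q := by
    intro a
    by_cases ha : a ∈ T
    · exact hwT a ha
    · exact hQ.not_mem_of_arc (q := Sum.inr (Sum.inl a))
        ⟨hwS a, fun h => ha ((hzS a).1 h), rfl⟩ (hz a)
  have hx : ∀ e : {e : α × α // H.Adj e.1 e.2}, e.1.1 ∉ T →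
      Sum.inr (Sum.inr (Sum.inr e)) ∉ Q := fun e he =>
    hQ.not_mem_of_arc (q := Sum.inr (Sum.inl e.1.1))
      ⟨hxS e, fun h => he ((hzS _).1 h), rfl⟩ (hz _)
  obtain ⟨q, hq⟩ := hQ.1.nonempty
  rcases q with a | a | j | e
  · exact hw a hq
  · exact hz a hq
  · exact hu j hq
  · by_cases he : e.1.1 ∈ T
    · have he2 : e.1.2 ∉ T := fun h => hind _ he _ h e.2
      exact hQ.not_mem_of_arc
        (q := Sum.inr (Sum.inr (Sum.inr ⟨(e.1.2, e.1.1), e.2.symm⟩)))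
        ⟨hxS e, hxS _, rfl, rfl⟩ (hx _ he2) hq
    · exact hx e he hq

/-- `H` has an independent set with exactly one vertex from each of the `k` color
classes (given by the surjective coloring `c`) iff the reduction digraph has a
knot-free vertex deletion set of size at most `k`. -/
theorem multicolored_independent_set_iff_kfvd {α : Type*} [Fintype α] [DecidableEq α]
    (k : ℕ) (H : SimpleGraph α) [DecidableRel H.Adj]
    (c : α → Fin k) (hc : Function.Surjective c) :
    (∃ T : Finset α, (∀ j : Fin k, ∃! a, a ∈ T ∧ c a = j) ∧
        ∀ a ∈ T, ∀ b ∈ T, ¬ H.Adj a b) ↔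
    (∃ S : Set (α ⊕ α ⊕ Fin k ⊕ {e : α × α // H.Adj e.1 e.2}),
        S.ncard ≤ k ∧ IsKFVD (RedArc H c) S) := by
  constructor
  · rintro ⟨T, hT, hind⟩
    refine ⟨_, ?_, isKFVD_of_independent H c T (fun j => (hT j).exists) hind⟩
    refine (Set.ncard_image_le T.finite_toSet).trans ?_
    have hinj : Set.InjOn c T := fun a ha b hb hab =>
      (hT (c b)).unique ⟨ha, hab⟩ ⟨hb, rfl⟩
    rw [Set.ncard_coe_finset, ← Finset.card_image_of_injOn hinj]
    exact (Finset.card_le_univ _).trans_eq (Fintype.card_fin k)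
  · rintro ⟨S, hcard, hS⟩
    choose s hsS hs using exists_mem_of_isKFVD H c hc hS
    have hcls : ∀ j, gadgetClass H c (s j) = some j := by
      intro j
      rcases hs j with h | ⟨a, ha, h⟩
      · rw [h]; rfl
      · rw [h]; exact congrArg some ha
    have hsinj : Function.Injective s := fun i j hij =>
      Option.some.inj ((hcls i).symm.trans ((congrArg _ hij).trans (hcls j)))
    have hrange : Set.range s = S := by
      refine Set.eq_of_subset_of_ncard_le (Set.range_subset_iff.2 hsS) ?_ S.toFinite
      rw [← Set.image_univ, Set.ncard_image_of_injective _ hsinj, Set.ncard_univ, Nat.card_fin]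
      exact hcard
    have huniq : ∀ v ∈ S, ∀ j, gadgetClass H c v = some j → v = s j := by
      intro v hv j hj
      rw [← hrange] at hv
      obtain ⟨i, rfl⟩ := hv
      rw [Option.some.inj ((hcls i).symm.trans hj)]
    have hxS : ∀ e, Sum.inr (Sum.inr (Sum.inr e)) ∉ S := by
      intro e he
      rw [← hrange] at he
      obtain ⟨i, hi⟩ := he
      have := hcls i
      rw [hi] at this
      exact absurd this (by simp [gadgetClass])
    have hz : ∀ j, ∃ a, c a = j ∧ s j = Sum.inr (Sum.inl a) := by
      intro j
      refine (hs j).resolve_left fun hj => ?_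
      obtain ⟨a, ha⟩ := hc j
      have huS : Sum.inr (Sum.inr (Sum.inl j)) ∈ S := hj ▸ hsS j
      refine not_isKFVD_of_two_cycle (E := RedArc H c) (S := S)
        (p := Sum.inl a) (q := Sum.inr (Sum.inl a)) (by simp) ?_ ?_ rfl rfl ?_ ?_ hS
      · intro h
        have := huniq _ h j (congrArg some ha)
        simp [hj] at this
      · intro h
        have := huniq _ h j (congrArg some ha)
        simp [hj] at this
      · rintro (b | b | i | e) hb hbS <;> simp_all [RedArc]
      · rintro (b | b | i | e) hb hbS
        · simp_all [RedArc]
        · simp_all [RedArc]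
        · obtain rfl : c a = i := hb
          exact absurd (ha ▸ huS) hbS
        · simp_all [RedArc]
    choose t htc hts using hz
    have htS : ∀ j, Sum.inr (Sum.inl (t j)) ∈ S := fun j => hts j ▸ hsS j
    refine ⟨Finset.univ.image t, fun j => ⟨t j, ⟨by simp, htc j⟩, ?_⟩, ?_⟩
    · rintro b ⟨hb, hbj⟩
      obtain ⟨i, -, rfl⟩ := Finset.mem_image.1 hb
      rw [← hbj, htc]
    · intro a ha b hb hab
      obtain ⟨i, -, rfl⟩ := Finset.mem_image.1 ha
      obtain ⟨j, -, rfl⟩ := Finset.mem_image.1 hb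
      -- The two gadget vertices of this edge survive, and both their arcs to `z`-vertices die.
      refine not_isKFVD_of_two_cycle (E := RedArc H c) (S := S)
        (p := Sum.inr (Sum.inr (Sum.inr ⟨(t i, t j), hab⟩)))
        (q := Sum.inr (Sum.inr (Sum.inr ⟨(t j, t i), hab.symm⟩)))
        ?_ (hxS _) (hxS _) ⟨rfl, rfl⟩ ⟨rfl, rfl⟩ ?_ ?_ hS
      · intro h
        simp only [Sum.inr.injEq, Subtype.mk.injEq, Prod.mk.injEq] at h
        exact hab.ne h.1
      · rintro (b | b | l | ⟨⟨e₁, e₂⟩, he⟩) hb hbS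
        · exact hb.elim
        · obtain rfl : t i = b := hb
          exact absurd (htS i) hbS
        · exact hb.elim
        · obtain ⟨h1, h2⟩ := hb
          dsimp only at h1 h2
          subst h1 h2
          exact Or.inr rfl
      · rintro (b | b | l | ⟨⟨e₁, e₂⟩, he⟩) hb hbS
        · exact hb.elim
        · obtain rfl : t j = b := hb
          exact absurd (htS j) hbS
        · exact hb.elim
        · obtain ⟨h1, h2⟩ := hb
          dsimp only at h1 h2
          subst h1 h2
          exact Or.inl rfl
end
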